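/- Let q = 2^h with h > 5 and let A be the point set produced by the q/16-construction with data α₁, α₂, α₃, α₄, α, β₁, β₂, β₃ and S = {x ∈ F_q : Tr(α_i x) = 0 for i = 1,...,4}. Then for every s ∈ S and every k ∈ F_2, the projectivity of PG(2,q) given by (x:y:z) ↦ (x : kα₄x + y : sx + z) maps A onto itself; these q/8 projectivities form a group of elations with axis the line X = 0 stabilising A. In particular A admits a group of elations of order q/8. -/

import Mathlib

open scoped Classical

noncomputable section

variable {K : Type*} [Field K]

/-- The absolute trace-style sum `x + x² + x⁴ + ⋯ + x^(2^(h-1))`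
(it lands in the prime subfield `F₂` when `|K| = 2^h`). -/
def Tr (h : ℕ) (x : K) : K := ∑ i ∈ Finset.range h, x ^ 2 ^ i

/-- `F₂`-independence of a tuple of elements of a field of characteristic two:
no nontrivial combination with coefficients `0`/`1` vanishes. -/
def F2Indep {n : ℕ} (v : Fin n → K) : Prop :=
  ∀ c : Fin n → K, (∀ i, c i = 0 ∨ c i = 1) → ∑ i, c i * v i = 0 → ∀ i, c i = 0

/-- The `F₂`-span of a tuple of elements of a field of characteristic two. -/
def F2Span {n : ℕ} (v : Fin n → K) : Set K :=
  {x | ∃ c : Fin n → K, (∀ i, c i = 0 ∨ c i = 1) ∧ x = ∑ i, c i * v i}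

/-- `α·S` for an additive subgroup `S` of the field. -/
def smulSub (α : K) (S : AddSubgroup K) : AddSubgroup K :=
  S.map (AddMonoidHom.mulLeft α)

/-- Points of `PG(2,q)`: one-dimensional subspaces of `K³`. -/
abbrev Pt (K : Type*) [Field K] := Projectivization K (Fin 3 → K)

/-- The point `(a : b : c)` of `PG(2,q)`. -/
def pt3 (a b c : K) (habc : ¬(a = 0 ∧ b = 0 ∧ c = 0)) : Pt K :=
  Projectivization.mk K ![a, b, c] (fun h0 => habc
    ⟨by simpa using congrFun h0 0, by simpa using congrFun h0 1, by simpa using congrFun h0 2⟩)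

/-- The point `(a : b)` of `PG(1,q)`. -/
def pt2 (a b : K) (hab : ¬(a = 0 ∧ b = 0)) : Projectivization K (Fin 2 → K) :=
  Projectivization.mk K ![a, b] (fun h0 => hab
    ⟨by simpa using congrFun h0 0, by simpa using congrFun h0 1⟩)

/-- An `F₂`-linear set of points of `PG(1,q)`: in characteristic two, the
`F₂`-subspaces of `K²` are exactly its additive subgroups. -/
def IsF2Linear (T : Set (Projectivization K (Fin 2 → K))) : Prop :=
  ∃ U : AddSubgroup (Fin 2 → K),
    T = {P | ∃ u : Fin 2 → K, ∃ hu : u ≠ 0, u ∈ U ∧ Projectivization.mk K u hu = P}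

/-- Lines of `PG(2,q)`: two-dimensional subspaces of `K³`. -/
def IsLine (L : Submodule K (Fin 3 → K)) : Prop := Module.finrank K L = 2

/-- Incidence of a point with a line. -/
def OnLine (P : Pt K) (L : Submodule K (Fin 3 → K)) : Prop := P.submodule ≤ L

/-- The number of points of `A` lying on the line `L`. -/
def secantCount (A : Set (Pt K)) (L : Submodule K (Fin 3 → K)) : ℕ :=
  {P ∈ A | OnLine P L}.ncard

/-- A KM-arc of type `t`: `q+t` points meeting every line in `0`, `2` or `t` points. -/
def IsKMArc (q t : ℕ) (A : Set (Pt K)) : Prop :=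
  A.ncard = q + t ∧ ∀ L : Submodule K (Fin 3 → K), IsLine L →
    secantCount A L = 0 ∨ secantCount A L = 2 ∨ secantCount A L = t

/-- The projectivity of `PG(2,q)` induced by an element of `GL(3,q)`. -/
def projMap (f : (Fin 3 → K) ≃ₗ[K] (Fin 3 → K)) : Pt K → Pt K :=
  Projectivization.map f.toLinearMap f.injective

/-- `f` induces an elation with axis `L` and centre `R`: it fixes every point of `L`
and maps every line through `R` to itself. -/
def IsElation (f : (Fin 3 → K) ≃ₗ[K] (Fin 3 → K)) (L : Submodule K (Fin 3 → K))
    (R : Pt K) : Prop :=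
  IsLine L ∧ OnLine R L ∧ (∀ P : Pt K, OnLine P L → projMap f P = P) ∧
    ∀ M : Submodule K (Fin 3 → K), IsLine M → OnLine R M →
      ∀ P : Pt K, OnLine P M → OnLine (projMap f P) M

/-- `f` induces an elation with axis `L` (for some centre on `L`). -/
def IsElationAxis (f : (Fin 3 → K) ≃ₗ[K] (Fin 3 → K)) (L : Submodule K (Fin 3 → K)) : Prop :=
  ∃ R : Pt K, IsElation f L R

/-- The projectivity induced by `f` stabilises the point set `A`. -/
def Stabilises (f : (Fin 3 → K) ≃ₗ[K] (Fin 3 → K)) (A : Set (Pt K)) : Prop :=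
  projMap f '' A = A

/-- `N` lies on every `t`-secant of `A` (i.e. `N` is the `t`-nucleus). -/
def IsNucleus (t : ℕ) (A : Set (Pt K)) (N : Pt K) : Prop :=
  ∀ L : Submodule K (Fin 3 → K), IsLine L → secantCount A L = t → OnLine N L

/-- An elation KM-arc of type `t` with `t`-nucleus `N` and elation line `linf`:
for every `t`-secant `L ≠ linf`, the group of elations with axis `linf` stabilising `A`
acts transitively on `A ∩ L`. -/
def IsElationKMArc (q t : ℕ) (A : Set (Pt K)) (N : Pt K)
    (linf : Submodule K (Fin 3 → K)) : Prop :=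
  IsKMArc q t A ∧ IsLine linf ∧ OnLine N linf ∧ IsNucleus t A N ∧
    ∀ L : Submodule K (Fin 3 → K), IsLine L → secantCount A L = t → L ≠ linf →
      ∀ P ∈ A, OnLine P L → ∀ Q ∈ A, OnLine Q L →
        ∃ f : (Fin 3 → K) ≃ₗ[K] (Fin 3 → K),
          IsElationAxis f linf ∧ Stabilises f A ∧ projMap f P = Q

/-- A translation KM-arc with translation line `l`: the group of elations with axis `l`
stabilising `A` acts transitively on `A \ l`. -/
def IsTranslationKMArc (A : Set (Pt K)) (l : Submodule K (Fin 3 → K)) : Prop :=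
  IsLine l ∧ ∀ P ∈ A, ¬OnLine P l → ∀ Q ∈ A, ¬OnLine Q l →
    ∃ f : (Fin 3 → K) ≃ₗ[K] (Fin 3 → K),
      IsElationAxis f l ∧ Stabilises f A ∧ projMap f P = Q

/-- The line `X = 0` of `PG(2,q)`. -/
def lineX0 (K : Type*) [Field K] : Submodule K (Fin 3 → K) :=
  LinearMap.ker (LinearMap.proj (R := K) (φ := fun _ : Fin 3 => K) 0)

/-- The line `Y = aX` of `PG(2,q)`. -/
def lineYaX (a : K) : Submodule K (Fin 3 → K) where
  carrier := {v | v 1 = a * v 0}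
  add_mem' := by
    intro v w hv hw
    simp only [Set.mem_setOf_eq, Pi.add_apply] at hv hw ⊢
    rw [hv, hw]; ring
  zero_mem' := by simp
  smul_mem' := by
    intro c v hv
    simp only [Set.mem_setOf_eq, Pi.smul_apply, smul_eq_mul] at hv ⊢
    rw [hv]; ring

/-- The point set of the `q/8`-construction (Theorem 4.4 of the paper), built from
`F₂`-independent `a 0, a 1, a 2` and coset representatives `b 0, b 1, b 2`. -/
def q8Arc (h : ℕ) (a b : Fin 3 → K) : Set (Pt K) :=
  {P | ∃ x : K, (∀ i, Tr h (a i ^ 2 * x) = 0) ∧ P = pt3 0 1 x (by simp)}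
    ∪ {P | ∃ l : Fin 3 → K, (∀ i, l i = 0 ∨ l i = 1) ∧ ∃ s : K, (∀ i, Tr h (a i * s) = 0) ∧
        P = pt3 1 (l 0 * a 0 + l 1 * a 1 + l 2 * a 2)
          ((l 0 + l 1 + l 2 + l 1 * l 2) * b 0 + (l 1 + l 2 + l 0 * l 2) * b 1
            + (l 2 + l 0 * l 1) * b 2 + s) (by simp)}

/-- The point set of the `q/16`-construction (Theorem 5.2 of the paper). -/
def q16Arc (h : ℕ) (a : Fin 4 → K) (α : K) (b : Fin 3 → K) : Set (Pt K) :=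
  {P | ∃ x : K, Tr h (a 0 * (a 0 + a 3) * x) = 0 ∧ Tr h (a 1 * (a 1 + a 3) * x) = 0 ∧
      Tr h (a 2 * (a 2 + a 3) * x) = 0 ∧ Tr h (a 3 * α * x) = 1 ∧ P = pt3 0 1 x (by simp)}
    ∪ {P | ∃ l : Fin 4 → K, (∀ i, l i = 0 ∨ l i = 1) ∧ ∃ s : K, (∀ i, Tr h (a i * s) = 0) ∧
        P = pt3 1 (l 0 * a 0 + l 1 * a 1 + l 2 * a 2 + l 3 * a 3)
          ((l 0 + l 1 + l 2 + l 1 * l 2) * b 0 + (l 1 + l 2 + l 0 * l 2) * b 1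
            + (l 2 + l 0 * l 1) * b 2 + s) (by simp)}

/-- The semilinear collineation of `PG(2,q)` sending the point spanned by `v`
to the point spanned by `M (ψ ∘ v)`. -/
def frobMap (ψ : K ≃+* K) (M : (Fin 3 → K) ≃ₗ[K] (Fin 3 → K)) (P : Pt K) : Pt K :=
  Projectivization.mk K (M fun i => ψ (P.rep i)) (by
    rw [LinearEquiv.map_ne_zero_iff]
    intro h0
    apply P.rep_nonzero
    funext i
    have h2 : P.rep i = 0 := ψ.injective (by rw [map_zero]; exact congrFun h0 i)
    simpa using h2)

/-!
An elation with axis `ker φ` is a transvection `v ↦ v + φ v • w` with `φ w = 0`, and transvections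
with a common `φ` compose by adding their vectors `w`. For `φ = X` this makes
`(t, s) ↦ ((x : y : z) ↦ (x : tx + y : sx + z))` an injective homomorphism from `K × K`, so the
wanted group is the image of `{0, α₄} × S`. Translating by `α₄` only flips `λ₄`, on which
`f₁, f₂, f₃` do not depend, and translating by `s ∈ S` permutes each `S_λ`. Finally `S` is the
orthogonal complement of `⟨α₁, α₂, α₃, α₄⟩` for the trace form of `K` over `F₂`, which is
nondegenerate, so `|S| = q / 16`.
-/

section Trace

lemma Tr_zero (h : ℕ) : Tr h (0 : K) = 0 := by
  simp [Tr]

lemma Tr_add [CharP K 2] (h : ℕ) (x y : K) : Tr h (x + y) = Tr h x + Tr h y := by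
  simp only [Tr, add_pow_char_pow, Finset.sum_add_distrib]

lemma algebraMap_trace_eq_Tr [Fintype K] [Algebra (ZMod 2) K] {h : ℕ}
    (hcard : Fintype.card K = 2 ^ h) (x : K) :
    algebraMap (ZMod 2) K (Algebra.trace (ZMod 2) K x) = Tr h x := by
  have hdim : Module.finrank (ZMod 2) K = h :=
    Nat.pow_right_injective le_rfl
      (by simpa [hcard] using (Module.card_eq_pow_finrank (K := ZMod 2) (V := K)).symm)
  rw [FiniteField.algebraMap_trace_eq_sum_pow, hdim, Nat.card_zmod, Tr]

lemma F2Indep.ne_zero {n : ℕ} {a : Fin n → K} (ha : F2Indep a) (i : Fin n) : a i ≠ 0 := by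
  intro hi
  have hzero := ha (Pi.single i 1) (fun j => by by_cases hj : j = i <;> simp [hj])
    (by simp [Pi.single_apply, hi]) i
  simp at hzero

lemma F2Indep.linearIndependent [Algebra (ZMod 2) K] {n : ℕ} {a : Fin n → K} (ha : F2Indep a) :
    LinearIndependent (ZMod 2) a := by
  rw [Fintype.linearIndependent_iff]
  intro c hc i
  have hcoeff : ∀ r : ZMod 2, algebraMap (ZMod 2) K r = 0 ∨ algebraMap (ZMod 2) K r = 1 := by
    intro r
    fin_cases r
    exacts [Or.inl (map_zero _), Or.inr (map_one _)]
  refine (map_eq_zero (algebraMap (ZMod 2) K)).mp (ha _ (fun j => hcoeff (c j)) ?_ i)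
  simpa only [Algebra.smul_def] using hc

/-- The additive group `S = {s : Tr (aᵢ s) = 0 for all i}` of the `q/16`-construction, for a family
`a` of any length. -/
def traceAnnihilator [CharP K 2] {ι : Type*} (h : ℕ) (a : ι → K) : AddSubgroup K where
  carrier := {s | ∀ i, Tr h (a i * s) = 0}
  zero_mem' i := by rw [mul_zero, Tr_zero]
  add_mem' hs ht i := by rw [mul_add, Tr_add, hs i, ht i, add_zero]
  neg_mem' hs i := by rw [CharTwo.neg_eq, hs i]

lemma mem_traceAnnihilator [CharP K 2] {ι : Type*} {h : ℕ} {a : ι → K} {s : K} :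
    s ∈ traceAnnihilator h a ↔ ∀ i, Tr h (a i * s) = 0 :=
  Iff.rfl

lemma coe_traceAnnihilator_eq_orthogonal [Fintype K] [CharP K 2] [Algebra (ZMod 2) K] {ι : Type*}
    {h : ℕ} (hcard : Fintype.card K = 2 ^ h) (a : ι → K) :
    (traceAnnihilator h a : Set K) =
      (Algebra.traceForm (ZMod 2) K).orthogonal (Submodule.span (ZMod 2) (Set.range a)) := by
  ext s
  have hspan : s ∈ (Algebra.traceForm (ZMod 2) K).orthogonal
      (Submodule.span (ZMod 2) (Set.range a)) ↔ Submodule.span (ZMod 2) (Set.range a) ≤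
        LinearMap.ker ((Algebra.traceForm (ZMod 2) K).flip s) := Iff.rfl
  rw [SetLike.mem_coe, SetLike.mem_coe, mem_traceAnnihilator, hspan, Submodule.span_le,
    Set.range_subset_iff]
  refine forall_congr' fun i => ?_
  rw [← algebraMap_trace_eq_Tr hcard, map_eq_zero]
  rfl

lemma card_traceAnnihilator_mul [Fintype K] [CharP K 2] {h n : ℕ}
    (hcard : Fintype.card K = 2 ^ h) {a : Fin n → K} (ha : F2Indep a) :
    Nat.card (traceAnnihilator h a) * 2 ^ n = 2 ^ h := by
  let _ := ZMod.algebra K 2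
  let W := Submodule.span (ZMod 2) (Set.range a)
  let B := Algebra.traceForm (ZMod 2) K
  have hdimW : Module.finrank (ZMod 2) W = n := by
    simpa using finrank_span_eq_card ha.linearIndependent
  have hdim : Module.finrank (ZMod 2) (B.orthogonal W) + n = Module.finrank (ZMod 2) K := by
    rw [LinearMap.BilinForm.finrank_orthogonal (traceForm_nondegenerate (ZMod 2) K), hdimW]
    exact Nat.sub_add_cancel (hdimW ▸ W.finrank_le)
  have hS : Nat.card (traceAnnihilator h a) = Nat.card (B.orthogonal W) :=
    Nat.card_congr (Equiv.setCongr (coe_traceAnnihilator_eq_orthogonal hcard a))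
  rw [hS, Module.natCard_eq_pow_finrank (K := ZMod 2), Nat.card_zmod, ← pow_add, hdim, ← hcard,
    Module.card_eq_pow_finrank (K := ZMod 2), ZMod.card]

end Trace

section CharTwo

variable {R : Type*} [Ring R] [CharP R 2]

lemma mem_zmultiples_iff_exists_mul {x t : R} :
    t ∈ AddSubgroup.zmultiples x ↔ ∃ k : R, (k = 0 ∨ k = 1) ∧ t = k * x := by
  constructor
  · rintro ⟨m, rfl⟩
    refine ⟨m, ?_, by simp⟩
    rcases Int.even_or_odd m with hm | hm
    · exact Or.inl ((CharP.intCast_eq_zero_iff R 2 m).mpr hm.two_dvd)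
    · obtain ⟨j, rfl⟩ := hm
      exact Or.inr (by simp [CharTwo.two_eq_zero])
  · rintro ⟨k, rfl | rfl, rfl⟩
    · simp
    · simp

lemma card_zmultiples_eq_two {x : R} (hx : x ≠ 0) :
    Nat.card (AddSubgroup.zmultiples x) = 2 := by
  rw [Nat.card_zmultiples]
  exact addOrderOf_eq_prime (by rw [two_nsmul, CharTwo.add_self_eq_zero]) hx

lemma add_eq_zero_or_eq_one {k l : R} (hk : k = 0 ∨ k = 1) (hl : l = 0 ∨ l = 1) :
    k + l = 0 ∨ k + l = 1 := by
  rcases hk with rfl | rfl <;> rcases hl with rfl | rfl <;> simp [CharTwo.add_self_eq_zero]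

end CharTwo

section Plane

lemma onLine_mk {v : Fin 3 → K} (hv : v ≠ 0) {L : Submodule K (Fin 3 → K)} :
    OnLine (Projectivization.mk K v hv) L ↔ v ∈ L := by
  rw [OnLine, Projectivization.submodule_mk, Submodule.span_singleton_le_iff_mem]

lemma projMap_mk (f : (Fin 3 → K) ≃ₗ[K] (Fin 3 → K)) {v : Fin 3 → K} (hv : v ≠ 0) :
    projMap f (Projectivization.mk K v hv) =
      Projectivization.mk K (f v) (f.map_ne_zero_iff.mpr hv) := rfl

lemma projMap_eq_smul (f : (Fin 3 → K) ≃ₗ[K] (Fin 3 → K)) (P : Pt K) : projMap f P = f • P := rfl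

lemma stabilises_of_mapsTo {G : Subgroup ((Fin 3 → K) ≃ₗ[K] (Fin 3 → K))} {A : Set (Pt K)}
    (hG : ∀ g ∈ G, Set.MapsTo (projMap g) A A) {g : (Fin 3 → K) ≃ₗ[K] (Fin 3 → K)} (hg : g ∈ G) :
    Stabilises g A := by
  refine (hG g hg).image_subset.antisymm fun P hP => ⟨_, hG g⁻¹ (inv_mem hg) hP, ?_⟩
  simp only [projMap_eq_smul, smul_inv_smul]

lemma isLine_ker {φ : Module.Dual K (Fin 3 → K)} (hφ : φ ≠ 0) : IsLine (LinearMap.ker φ) := by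
  have hdim := Module.Dual.finrank_ker_add_one_of_ne_zero hφ
  rw [Module.finrank_fin_fun] at hdim
  exact Nat.succ_injective hdim

lemma projMap_transvection_of_onLine {φ : Module.Dual K (Fin 3 → K)} {w : Fin 3 → K}
    (hw : φ w = 0) {P : Pt K} (hP : OnLine P (LinearMap.ker φ)) :
    projMap (LinearEquiv.transvection hw) P = P := by
  induction P using Projectivization.ind with
  | h v hv =>
    have hφv : φ v = 0 := (onLine_mk hv).mp hP
    simp only [projMap_mk, LinearEquiv.transvection.apply, hφv, zero_smul, add_zero]

lemma onLine_projMap_transvection {φ : Module.Dual K (Fin 3 → K)} {w : Fin 3 → K}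
    (hw : φ w = 0) {M : Submodule K (Fin 3 → K)} (hwM : w ∈ M) {P : Pt K} (hP : OnLine P M) :
    OnLine (projMap (LinearEquiv.transvection hw) P) M := by
  induction P using Projectivization.ind with
  | h v hv =>
    rw [projMap_mk, onLine_mk]
    exact M.add_mem ((onLine_mk hv).mp hP) (M.smul_mem _ hwM)

lemma isElationAxis_transvection {φ : Module.Dual K (Fin 3 → K)} (hφ : φ ≠ 0) {w : Fin 3 → K}
    (hw : φ w = 0) : IsElationAxis (LinearEquiv.transvection hw) (LinearMap.ker φ) := by
  -- The centre is `w`; for `w = 0` the map is the identity and any point of the axis will do.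
  obtain ⟨r, hr0, hr, hrw⟩ : ∃ r, r ≠ 0 ∧ φ r = 0 ∧ w ∈ Submodule.span K {r} := by
    rcases eq_or_ne w 0 with rfl | hw0
    · have hker : LinearMap.ker φ ≠ ⊥ := by
        intro hbot
        have hdim := isLine_ker hφ
        rw [IsLine, hbot, finrank_bot] at hdim
        exact two_ne_zero hdim.symm
      obtain ⟨r, hr, hr0⟩ := (LinearMap.ker φ).ne_bot_iff.mp hker
      exact ⟨r, hr0, hr, zero_mem _⟩
    · exact ⟨w, hw0, hw, Submodule.mem_span_singleton_self w⟩
  refine ⟨Projectivization.mk K r hr0, isLine_ker hφ, (onLine_mk hr0).mpr hr,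
    fun P => projMap_transvection_of_onLine hw, fun M _ hrM P => ?_⟩
  rw [OnLine, Projectivization.submodule_mk] at hrM
  exact onLine_projMap_transvection hw (hrM hrw)

end Plane

section Shear

/-- The linear map `(x, y, z) ↦ (x, tx + y, sx + z)`, as a transvection of the linear form `X`. -/
def shear (t s : K) : (Fin 3 → K) ≃ₗ[K] (Fin 3 → K) :=
  LinearEquiv.transvection (f := LinearMap.proj 0) (v := ![0, t, s]) rfl

lemma shear_apply (t s : K) (v : Fin 3 → K) :
    shear t s v = ![v 0, t * v 0 + v 1, s * v 0 + v 2] := by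
  have htransvection : shear t s v = v + v 0 • ![0, t, s] := rfl
  rw [htransvection]
  ext i
  fin_cases i <;> simp <;> ring

lemma isElationAxis_shear (t s : K) : IsElationAxis (shear t s) (lineX0 K) :=
  isElationAxis_transvection (fun h => one_ne_zero (congrArg (fun φ => φ ![1, 0, 0]) h)) rfl

lemma projMap_shear_pt3_zero (t s y z : K) (hyz : ¬((0 : K) = 0 ∧ y = 0 ∧ z = 0)) :
    projMap (shear t s) (pt3 0 y z hyz) = pt3 0 y z hyz :=
  projMap_transvection_of_onLine rfl ((onLine_mk _).mpr rfl)

lemma projMap_shear_pt3_one (t s y z : K) :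
    projMap (shear t s) (pt3 1 y z (by simp)) = pt3 1 (t + y) (s + z) (by simp) := by
  simp only [pt3, projMap_mk, shear_apply]
  simp

/-- Shears compose by adding their parameters, so they form a copy of `K × K` in `GL(3, K)`. -/
def shearHom : Multiplicative (K × K) →* ((Fin 3 → K) ≃ₗ[K] (Fin 3 → K)) where
  toFun p := shear p.toAdd.1 p.toAdd.2
  map_one' := by
    ext1 v
    ext i
    fin_cases i <;> simp [shear_apply]
  map_mul' p r := by
    ext1 v
    ext i
    fin_cases i <;> simp [shear_apply] <;> ring

lemma shearHom_injective : Function.Injective (shearHom : Multiplicative (K × K) → _) := by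
  intro p r hpr
  have hv : shear p.toAdd.1 p.toAdd.2 ![1, 0, 0] = shear r.toAdd.1 r.toAdd.2 ![1, 0, 0] :=
    congrArg (fun f => f ![1, 0, 0]) hpr
  rw [shear_apply, shear_apply] at hv
  refine Multiplicative.toAdd.injective (Prod.ext ?_ ?_)
  · simpa using congrFun hv 1
  · simpa using congrFun hv 2

/-- The group of shears with parameters `t ∈ T` and `s ∈ S`. -/
def shearGroup (T S : AddSubgroup K) : Subgroup ((Fin 3 → K) ≃ₗ[K] (Fin 3 → K)) :=
  (AddSubgroup.toSubgroup (T.prod S)).map shearHom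

lemma mem_shearGroup {T S : AddSubgroup K} {f : (Fin 3 → K) ≃ₗ[K] (Fin 3 → K)} :
    f ∈ shearGroup T S ↔ ∃ t ∈ T, ∃ s ∈ S, shear t s = f :=
  ⟨fun ⟨p, ⟨ht, hs⟩, hf⟩ => ⟨p.toAdd.1, ht, p.toAdd.2, hs, hf⟩,
    fun ⟨t, ht, s, hs, hf⟩ => ⟨Multiplicative.ofAdd (t, s), ⟨ht, hs⟩, hf⟩⟩

lemma card_shearGroup (T S : AddSubgroup K) :
    Nat.card (shearGroup T S) = Nat.card T * Nat.card S := by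
  rw [shearGroup, Subgroup.card_map_of_injective shearHom_injective, ← Nat.card_prod]
  exact Nat.card_congr (T.prodEquiv S).toEquiv

end Shear

section Arc

variable [CharP K 2]

lemma mapsTo_projMap_shear_q16Arc (h : ℕ) (a : Fin 4 → K) (α : K) (b : Fin 3 → K) {k s : K}
    (hk : k = 0 ∨ k = 1) (hs : s ∈ traceAnnihilator h a) :
    Set.MapsTo (projMap (shear (k * a 3) s)) (q16Arc h a α b) (q16Arc h a α b) := by
  rintro _ (⟨x, h0, h1, h2, h3, rfl⟩ | ⟨l, hl, s', hs', rfl⟩)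
  · exact Or.inl ⟨x, h0, h1, h2, h3, projMap_shear_pt3_zero ..⟩
  · refine Or.inr ⟨Function.update l 3 (l 3 + k), ?_, s + s', add_mem hs hs', ?_⟩
    · rw [Function.forall_update_iff l fun _ c => c = 0 ∨ c = 1]
      exact ⟨add_eq_zero_or_eq_one (hl 3) hk, fun i _ => hl i⟩
    · rw [projMap_shear_pt3_one]
      congr 1 <;> simp <;> ring

lemma stabilises_q16Arc_of_mem_shearGroup (h : ℕ) (a : Fin 4 → K) (α : K) (b : Fin 3 → K)
    {f : (Fin 3 → K) ≃ₗ[K] (Fin 3 → K)}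
    (hf : f ∈ shearGroup (AddSubgroup.zmultiples (a 3)) (traceAnnihilator h a)) :
    Stabilises f (q16Arc h a α b) := by
  refine stabilises_of_mapsTo (fun g hg => ?_) hf
  obtain ⟨t, ht, s, hs, rfl⟩ := mem_shearGroup.mp hg
  obtain ⟨k, hk, rfl⟩ := mem_zmultiples_iff_exists_mul.mp ht
  exact mapsTo_projMap_shear_q16Arc h a α b hk hs

lemma mem_shearGroup_zmultiples {h : ℕ} {a : Fin 4 → K} {f : (Fin 3 → K) ≃ₗ[K] (Fin 3 → K)} :
    f ∈ shearGroup (AddSubgroup.zmultiples (a 3)) (traceAnnihilator h a) ↔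
      ∃ s k : K, (∀ i, Tr h (a i * s) = 0) ∧ (k = 0 ∨ k = 1) ∧
        ∀ v : Fin 3 → K, f v = ![v 0, k * a 3 * v 0 + v 1, s * v 0 + v 2] := by
  rw [mem_shearGroup]
  constructor
  · rintro ⟨t, ht, s, hs, rfl⟩
    obtain ⟨k, hk, rfl⟩ := mem_zmultiples_iff_exists_mul.mp ht
    exact ⟨s, k, hs, hk, shear_apply (k * a 3) s⟩
  · rintro ⟨s, k, hs, hk, hf⟩
    exact ⟨k * a 3, mem_zmultiples_iff_exists_mul.mpr ⟨k, hk, rfl⟩, s, hs,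
      LinearEquiv.ext fun v => (shear_apply (k * a 3) s v).trans (hf v).symm⟩

lemma card_shearGroup_zmultiples [Fintype K] {h : ℕ} (hcard : Fintype.card K = 2 ^ h)
    {a : Fin 4 → K} (ha : F2Indep a) :
    Nat.card (shearGroup (AddSubgroup.zmultiples (a 3)) (traceAnnihilator h a)) = 2 ^ h / 8 := by
  rw [card_shearGroup, card_zmultiples_eq_two (ha.ne_zero 3)]
  have hS := card_traceAnnihilator_mul hcard ha
  omega

end Arc

theorem q16_elation_group_general
    {K : Type*} [Field K] [Fintype K] (h : ℕ) (hcard : Fintype.card K = 2 ^ h)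
    (a : Fin 4 → K) (α : K) (b : Fin 3 → K) (hind : F2Indep a) :
    (∀ s k : K, (∀ i, Tr h (a i * s) = 0) → (k = 0 ∨ k = 1) →
      ∃ f : (Fin 3 → K) ≃ₗ[K] (Fin 3 → K),
        (∀ v : Fin 3 → K, f v = ![v 0, k * a 3 * v 0 + v 1, s * v 0 + v 2]) ∧
        IsElationAxis f (lineX0 K) ∧ Stabilises f (q16Arc h a α b)) ∧
    ∃ G : Subgroup ((Fin 3 → K) ≃ₗ[K] (Fin 3 → K)),
      Nat.card G = 2 ^ h / 8 ∧
      (∀ f : (Fin 3 → K) ≃ₗ[K] (Fin 3 → K), f ∈ G ↔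
        ∃ s k : K, (∀ i, Tr h (a i * s) = 0) ∧ (k = 0 ∨ k = 1) ∧
          ∀ v : Fin 3 → K, f v = ![v 0, k * a 3 * v 0 + v 1, s * v 0 + v 2]) ∧
      ∀ f ∈ G, IsElationAxis f (lineX0 K) ∧ Stabilises f (q16Arc h a α b) := by
  have : CharP K 2 := charP_of_card_eq_prime_pow hcard
  let G := shearGroup (AddSubgroup.zmultiples (a 3)) (traceAnnihilator h a)
  have hG : ∀ f ∈ G, IsElationAxis f (lineX0 K) ∧ Stabilises f (q16Arc h a α b) := by
    intro f hf
    refine ⟨?_, stabilises_q16Arc_of_mem_shearGroup h a α b hf⟩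
    obtain ⟨t, -, s, -, rfl⟩ := mem_shearGroup.mp hf
    exact isElationAxis_shear t s
  refine ⟨fun s k hs hk => ⟨shear (k * a 3) s, shear_apply (k * a 3) s, hG _ ?_⟩,
    G, card_shearGroup_zmultiples hcard hind, fun f => mem_shearGroup_zmultiples, hG⟩
  exact mem_shearGroup_zmultiples.mpr ⟨s, k, hs, hk, shear_apply (k * a 3) s⟩

/-- Theorem 5.5: the maps `(x:y:z) ↦ (x : kα₄x + y : sx + z)`, `s ∈ S`,
`k ∈ F₂`, stabilise the `q/16`-construction and are elations with axis `X = 0`; they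
form a group of elations of order `q/8` stabilising the arc. -/
theorem q16_elation_group
    {K : Type*} [Field K] [Fintype K] (h : ℕ) (hh : 5 < h)
    (hcard : Fintype.card K = 2 ^ h)
    (a : Fin 4 → K) (α : K) (b : Fin 3 → K)
    (hind : F2Indep a) (ha : ∀ i, a i ≠ 0)
    (hsq1 : a 0 ^ 2 / a 3 ∈ F2Span a)
    (hsq2 : a 1 ^ 2 / a 3 ∈ F2Span a)
    (hsq3 : a 2 ^ 2 / a 3 ∈ F2Span a)
    (hαmem : α ∈ F2Span a)
    (hαind : F2Indep ![a 0 * (a 0 + a 3), a 1 * (a 1 + a 3), a 2 * (a 2 + a 3), a 3 * α])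
    (hb : ∀ i, b i ≠ 0)
    (htr : ∀ (i : Fin 4) (j : Fin 3),
      Tr h (a i * b j) = if (i : ℕ) = (j : ℕ) then 1 else 0) :
    (∀ s k : K, (∀ i, Tr h (a i * s) = 0) → (k = 0 ∨ k = 1) →
      ∃ f : (Fin 3 → K) ≃ₗ[K] (Fin 3 → K),
        (∀ v : Fin 3 → K, f v = ![v 0, k * a 3 * v 0 + v 1, s * v 0 + v 2]) ∧
        IsElationAxis f (lineX0 K) ∧ Stabilises f (q16Arc h a α b)) ∧
    ∃ G : Subgroup ((Fin 3 → K) ≃ₗ[K] (Fin 3 → K)),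
      Nat.card G = 2 ^ h / 8 ∧
      (∀ f : (Fin 3 → K) ≃ₗ[K] (Fin 3 → K), f ∈ G ↔
        ∃ s k : K, (∀ i, Tr h (a i * s) = 0) ∧ (k = 0 ∨ k = 1) ∧
          ∀ v : Fin 3 → K, f v = ![v 0, k * a 3 * v 0 + v 1, s * v 0 + v 2]) ∧
      ∀ f ∈ G, IsElationAxis f (lineX0 K) ∧ Stabilises f (q16Arc h a α b) :=
  q16_elation_group_general h hcard a α b hind
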